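/- The entire function Z₂(s) has no zero in the right half-plane Re(s) ≥ 20; that is, for every complex s with Re(s) ≥ 20 one has Z₂(s) ≠ 0. -/

import Mathlib

open Complex

noncomputable def chi (s : ℂ) : ℂ := s * (s - 1) * completedRiemannZeta₀ s + 1

noncomputable def A : ℂ := Real.pi / 3 - 1

noncomputable def f1 (s : ℂ) : ℂ :=
  (s - 1) * ((s - 1) * (3 * s - 2) * (A * s - A + 1) * chi (s + 1) * chi (3 * s)
    - (s + 1) * (s - 2) * chi s * chi (3 * s - 1)
    - 2 * (s - 1) * (s - 2) * chi s * chi (3 * s))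

noncomputable def f2 (s : ℂ) : ℂ :=
  (s - 2) * ((A * s + 3) * (s - 1) ^ 2 * chi (s + 2)
    - 2 * (s - 1) * (s - 3) * chi (s + 1)
    - (s + 2) * (s - 3) * chi s)

noncomputable def Z1 (s : ℂ) : ℂ := chi (2 * s) * f1 s - chi (2 * s - 1) * f1 (1 - s)

noncomputable def Z2 (s : ℂ) : ℂ := chi (2 * s) * f2 s - chi (2 * s - 1) * f2 (1 - s)

/-!
Consecutive values of `chi` far to the right grow geometrically: `‖χ w‖ ≤ 2/3 * ‖χ (w + 1)‖` for
`18 ≤ w.re`. Indeed `χ w = w (w - 1) Γ_ℝ(w) ζ(w)`, where `ζ` is close to `1` and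
`Γ_ℝ(w) / Γ_ℝ(w + 1) = B(w / 2, 1 / 2)` is bounded by the Beta function at `w.re / 2`, hence by
`√(2π / (w.re - 1))` through the log-convexity of `Γ`. Consequently the term of `f2 s` containing
`χ (s + 2)` dominates both `f2 s` and, after the functional equation `χ (1 - w) = χ w`,
`f2 (1 - s)`, so that `‖χ (2 s - 1) f2 (1 - s)‖ < ‖χ (2 s) f2 s‖`.
-/

section NormComparison

lemma norm_le_norm_of_abs_re_le_of_abs_im_le {z w : ℂ} (hre : |z.re| ≤ |w.re|)
    (him : |z.im| ≤ |w.im|) : ‖z‖ ≤ ‖w‖ := by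
  rw [norm_eq_sqrt_sq_add_sq, norm_eq_sqrt_sq_add_sq]
  exact Real.sqrt_le_sqrt (add_le_add (sq_le_sq.2 hre) (sq_le_sq.2 him))

lemma norm_add_ofReal_le_div_mul {s : ℂ} {x a b : ℝ} (hx : x ≤ s.re) (hb : 0 < x + b)
    (hab : b ≤ a) : ‖s + a‖ ≤ (x + a) / (x + b) * ‖s + b‖ := by
  have lower_bound : x + b ≤ ‖s + b‖ :=
    calc x + b ≤ (s + b).re := by simpa using hx
      _ ≤ ‖s + b‖ := re_le_norm _
  have triangle : ‖s + a‖ ≤ ‖s + b‖ + (a - b) :=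
    calc ‖s + a‖ = ‖(s + b) + ((a - b : ℝ) : ℂ)‖ := by push_cast; ring_nf
      _ ≤ ‖s + b‖ + ‖((a - b : ℝ) : ℂ)‖ := norm_add_le _ _
      _ = ‖s + b‖ + (a - b) := by rw [Complex.norm_of_nonneg (sub_nonneg.2 hab)]
  calc ‖s + a‖ ≤ ‖s + b‖ + (a - b) / (x + b) * (x + b) := by
        rwa [div_mul_cancel₀ _ hb.ne']
    _ ≤ ‖s + b‖ + (a - b) / (x + b) * ‖s + b‖ := by
        have : 0 ≤ a - b := sub_nonneg.2 hab
        gcongr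
    _ = (x + a) / (x + b) * ‖s + b‖ := by field_simp; ring

end NormComparison

section Gamma

lemma norm_betaIntegrand {x : ℝ} (hx : x ∈ Set.Ioo 0 1) (u v : ℂ) :
    ‖(x : ℂ) ^ (u - 1) * (1 - (x : ℂ)) ^ (v - 1)‖ = x ^ (u.re - 1) * (1 - x) ^ (v.re - 1) := by
  rw [norm_mul, ← ofReal_one, ← ofReal_sub, norm_cpow_eq_rpow_re_of_pos hx.1,
    norm_cpow_eq_rpow_re_of_pos (sub_pos.2 hx.2)]
  simp

lemma beta_eq_intervalIntegral {a b : ℝ} (ha : 0 < a) (hb : 0 < b) :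
    ProbabilityTheory.beta a b = ∫ x in (0 : ℝ)..1, x ^ (a - 1) * (1 - x) ^ (b - 1) := by
  rw [ProbabilityTheory.beta_eq_betaIntegralReal a b ha hb, betaIntegral, ← ofReal_re
    (∫ x in (0 : ℝ)..1, x ^ (a - 1) * (1 - x) ^ (b - 1)), ← intervalIntegral.integral_ofReal]
  congr 1
  refine intervalIntegral.integral_congr_Ioo_of_le zero_le_one fun x hx ↦ ?_
  rw [ofReal_mul, ofReal_cpow hx.1.le, ofReal_cpow (sub_nonneg.2 hx.2.le)]
  push_cast
  rfl

lemma norm_betaIntegral_le_beta {u v : ℂ} (hu : 0 < u.re) (hv : 0 < v.re) :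
    ‖betaIntegral u v‖ ≤ ProbabilityTheory.beta u.re v.re :=
  calc ‖betaIntegral u v‖
      ≤ ∫ x in (0 : ℝ)..1, ‖(x : ℂ) ^ (u - 1) * (1 - (x : ℂ)) ^ (v - 1)‖ :=
        intervalIntegral.norm_integral_le_integral_norm zero_le_one
    _ = ∫ x in (0 : ℝ)..1, x ^ (u.re - 1) * (1 - x) ^ (v.re - 1) :=
        intervalIntegral.integral_congr_Ioo_of_le zero_le_one fun _ hx ↦ norm_betaIntegrand hx u v
    _ = ProbabilityTheory.beta u.re v.re := (beta_eq_intervalIntegral hu hv).symm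

lemma sq_Gamma_midpoint_le {x y : ℝ} (hx : 0 < x) (hy : 0 < y) :
    Real.Gamma ((x + y) / 2) ^ 2 ≤ Real.Gamma x * Real.Gamma y := by
  have log_convex := Real.Gamma_mul_add_mul_le_rpow_Gamma_mul_rpow_Gamma (a := 1 / 2) (b := 1 / 2)
    hx hy (by norm_num) (by norm_num) (by norm_num)
  rw [← Real.sqrt_eq_rpow, ← Real.sqrt_eq_rpow,
    ← Real.sqrt_mul (Real.Gamma_pos_of_pos hx).le] at log_convex
  refine (Real.le_sqrt' (Real.Gamma_pos_of_pos (by positivity))).1 ?_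
  convert log_convex using 2
  ring

lemma sq_beta_one_half_le {x : ℝ} (hx : 1 / 2 < x) :
    ProbabilityTheory.beta x (1 / 2) ^ 2 ≤ Real.pi / (x - 1 / 2) := by
  have hx' : 0 < x - 1 / 2 := sub_pos.2 hx
  have hΓ : 0 < Real.Gamma (x + 1 / 2) := Real.Gamma_pos_of_pos (by linarith)
  have recurrence : Real.Gamma (x + 1 / 2) = (x - 1 / 2) * Real.Gamma (x - 1 / 2) := by
    rw [← Real.Gamma_add_one hx'.ne']
    ring_nf
  have sq_Gamma_le : Real.Gamma x ^ 2 ≤ Real.Gamma (x - 1 / 2) * Real.Gamma (x + 1 / 2) := by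
    have := sq_Gamma_midpoint_le hx' (by linarith : 0 < x + 1 / 2)
    rwa [show (x - 1 / 2 + (x + 1 / 2)) / 2 = x by ring] at this
  rw [ProbabilityTheory.beta, Real.Gamma_one_half_eq, div_pow, mul_pow, Real.sq_sqrt Real.pi_pos.le,
    div_le_div_iff₀ (pow_pos hΓ 2) hx']
  calc Real.Gamma x ^ 2 * Real.pi * (x - 1 / 2)
      ≤ Real.Gamma (x - 1 / 2) * Real.Gamma (x + 1 / 2) * Real.pi * (x - 1 / 2) := by gcongr
    _ = Real.pi * Real.Gamma (x + 1 / 2) ^ 2 := by rw [recurrence]; ring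

lemma Gammaℝ_eq_betaIntegral_mul {w : ℂ} (hw : 0 < w.re) :
    Gammaℝ w = betaIntegral (w / 2) (1 / 2) * Gammaℝ (w + 1) := by
  have beta_eq := Gamma_mul_Gamma_eq_betaIntegral (s := w / 2) (t := 1 / 2) (by simpa) (by norm_num)
  have hπ : (Real.pi : ℂ) ≠ 0 := ofReal_ne_zero.2 Real.pi_ne_zero
  have pi_cpow : (Real.pi : ℂ) ^ (-w / 2) =
      (Real.pi : ℂ) ^ (-(w + 1) / 2) * (Real.pi : ℂ) ^ (1 / 2 : ℂ) := by
    rw [← cpow_add _ _ hπ]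
    ring_nf
  rw [Gamma_one_half_eq] at beta_eq
  rw [Gammaℝ_def, Gammaℝ_def, pi_cpow, add_div]
  linear_combination (Real.pi : ℂ) ^ (-(w + 1) / 2) * beta_eq

lemma sq_norm_Gammaℝ_le {w : ℂ} (hw : 1 < w.re) :
    ‖Gammaℝ w‖ ^ 2 ≤ 2 * Real.pi / (w.re - 1) * ‖Gammaℝ (w + 1)‖ ^ 2 := by
  have half_re : (w / 2).re = w.re / 2 := by simp
  have norm_beta_le := norm_betaIntegral_le_beta (u := w / 2) (v := 1 / 2)
    (by rw [half_re]; linarith) (by norm_num)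
  rw [half_re, show (1 / 2 : ℂ).re = 1 / 2 by norm_num] at norm_beta_le
  rw [Gammaℝ_eq_betaIntegral_mul (by linarith), norm_mul, mul_pow]
  gcongr
  calc ‖betaIntegral (w / 2) (1 / 2)‖ ^ 2 ≤ ProbabilityTheory.beta (w.re / 2) (1 / 2) ^ 2 := by
        gcongr
    _ ≤ Real.pi / (w.re / 2 - 1 / 2) := sq_beta_one_half_le (by linarith)
    _ = 2 * Real.pi / (w.re - 1) := by
        have : w.re - 1 ≠ 0 := by linarith
        field_simp

end Gamma

section Zeta

lemma norm_one_div_natCast_cpow_le {n : ℕ} (hn : 2 ≤ n) {w : ℂ} (hw : 2 ≤ w.re) :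
    ‖1 / (n : ℂ) ^ w‖ ≤ 2 ^ (2 - w.re) * (1 / (n : ℝ) ^ 2) := by
  have hn0 : (0 : ℝ) < n := by exact_mod_cast (by lia : 0 < n)
  calc ‖1 / (n : ℂ) ^ w‖ = (n : ℝ) ^ (-w.re) := by
        rw [norm_div, norm_one, norm_natCast_cpow_of_pos (by lia), Real.rpow_neg hn0.le, one_div]
    _ = (n : ℝ) ^ (2 - w.re) * (1 / (n : ℝ) ^ 2) := by
        rw [one_div, ← Real.rpow_natCast, ← Real.rpow_neg hn0.le, ← Real.rpow_add hn0]
        congr 1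
        push_cast
        ring
    _ ≤ 2 ^ (2 - w.re) * (1 / (n : ℝ) ^ 2) := by
        have : (n : ℝ) ^ (2 - w.re) ≤ 2 ^ (2 - w.re) :=
          Real.rpow_le_rpow_of_nonpos two_pos (by exact_mod_cast hn) (by linarith)
        gcongr

lemma hasSum_one_div_add_two_sq :
    HasSum (fun n : ℕ ↦ 1 / ((n + 2 : ℕ) : ℝ) ^ 2) (Real.pi ^ 2 / 6 - 1) := by
  have := (hasSum_nat_add_iff' 2).2 hasSum_zeta_two
  simpa [Finset.sum_range_succ] using this

lemma norm_riemannZeta_sub_one_le {w : ℂ} (hw : 2 ≤ w.re) :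
    ‖riemannZeta w - 1‖ ≤ 2 ^ (2 - w.re) := by
  have hw' : 1 < w.re := by linarith
  have hasSum_tail : HasSum (fun n : ℕ ↦ 1 / ((n + 2 : ℕ) : ℂ) ^ w) (riemannZeta w - 1) := by
    have hw0 : w ≠ 0 := ne_zero_of_one_lt_re hw'
    have := (hasSum_nat_add_iff' 2).2 (summable_one_div_nat_cpow.2 hw').hasSum
    simpa [zeta_eq_tsum_one_div_nat_cpow hw', Finset.sum_range_succ, hw0] using this
  have pi_sq_le : Real.pi ^ 2 / 6 - 1 ≤ 1 := by nlinarith [Real.pi_gt_three, Real.pi_lt_d2]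
  calc ‖riemannZeta w - 1‖ ≤ 2 ^ (2 - w.re) * (Real.pi ^ 2 / 6 - 1) := by
        rw [← hasSum_tail.tsum_eq]
        exact tsum_of_norm_bounded (hasSum_one_div_add_two_sq.mul_left _)
          fun n ↦ norm_one_div_natCast_cpow_le (by lia) hw
    _ ≤ 2 ^ (2 - w.re) := mul_le_of_le_one_right (by positivity) pi_sq_le

lemma norm_riemannZeta_le_mul_norm_riemannZeta_add_one {w : ℂ} (hw : 9 ≤ w.re) :
    ‖riemannZeta w‖ ≤ 65 / 63 * ‖riemannZeta (w + 1)‖ := by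
  have sub_one_le {z : ℂ} (hz : 9 ≤ z.re) : ‖riemannZeta z - 1‖ ≤ 1 / 128 :=
    calc ‖riemannZeta z - 1‖ ≤ 2 ^ (2 - z.re) := norm_riemannZeta_sub_one_le (by linarith)
      _ ≤ (2 : ℝ) ^ (-7 : ℝ) := by gcongr <;> linarith
      _ = 1 / 128 := by norm_num
  have upper := norm_le_norm_add_norm_sub' (riemannZeta w) 1
  have lower := norm_le_norm_add_norm_sub (riemannZeta (w + 1)) 1
  rw [norm_one] at upper lower
  linarith [sub_one_le hw, sub_one_le (z := w + 1) (by simp; linarith)]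

end Zeta

section Chi

lemma chi_one_sub (w : ℂ) : chi (1 - w) = chi w := by
  rw [chi, chi, completedRiemannZeta₀_one_sub]
  ring

lemma chi_eq_mul_Gammaℝ_mul_riemannZeta {w : ℂ} (hw : 1 < w.re) :
    chi w = w * (w - 1) * Gammaℝ w * riemannZeta w := by
  have h0 : w ≠ 0 := ne_zero_of_one_lt_re hw
  have h1 : w ≠ 1 := by rintro rfl; simp at hw
  have h1' : 1 - w ≠ 0 := sub_ne_zero.2 h1.symm
  have hΓ : Gammaℝ w ≠ 0 := Gammaℝ_ne_zero_of_re_pos (by linarith)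
  rw [riemannZeta_def_of_ne_zero h0, completedRiemannZeta_eq, chi]
  field_simp
  ring

lemma chi_ne_zero_of_one_lt_re {w : ℂ} (hw : 1 < w.re) : chi w ≠ 0 := by
  have h1 : w ≠ 1 := by rintro rfl; simp at hw
  rw [chi_eq_mul_Gammaℝ_mul_riemannZeta hw]
  exact mul_ne_zero (mul_ne_zero (mul_ne_zero (ne_zero_of_one_lt_re hw) (sub_ne_zero.2 h1))
    (Gammaℝ_ne_zero_of_re_pos (by linarith))) (riemannZeta_ne_zero_of_one_lt_re hw)

lemma norm_chi_le_two_thirds_mul_norm_chi_add_one {w : ℂ} (hw : 18 ≤ w.re) :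
    ‖chi w‖ ≤ 2 / 3 * ‖chi (w + 1)‖ := by
  have Gammaℝ_le : ‖Gammaℝ w‖ ≤ 61 / 100 * ‖Gammaℝ (w + 1)‖ := by
    refine (sq_le_sq₀ (by positivity) (by positivity)).1 ?_
    rw [mul_pow]
    refine (sq_norm_Gammaℝ_le (by linarith)).trans ?_
    gcongr
    rw [div_le_iff₀ (by linarith)]
    linarith [Real.pi_lt_d2]
  have zeta_le := norm_riemannZeta_le_mul_norm_riemannZeta_add_one (w := w) (by linarith)
  have sub_one_le : ‖w - 1‖ ≤ ‖w + 1‖ := by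
    refine norm_le_norm_of_abs_re_le_of_abs_im_le (abs_le_abs ?_ ?_) ?_ <;> simp <;> linarith
  rw [chi_eq_mul_Gammaℝ_mul_riemannZeta (by linarith),
    chi_eq_mul_Gammaℝ_mul_riemannZeta (w := w + 1) (by simp; linarith)]
  simp only [add_sub_cancel_right, norm_mul]
  calc ‖w‖ * ‖w - 1‖ * ‖Gammaℝ w‖ * ‖riemannZeta w‖
      ≤ ‖w‖ * ‖w + 1‖ * (61 / 100 * ‖Gammaℝ (w + 1)‖) * (65 / 63 * ‖riemannZeta (w + 1)‖) := by
        gcongr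
    _ = (61 / 100 * (65 / 63)) * (‖w + 1‖ * ‖w‖ * ‖Gammaℝ (w + 1)‖ * ‖riemannZeta (w + 1)‖) := by
        ring
    _ ≤ 2 / 3 * (‖w + 1‖ * ‖w‖ * ‖Gammaℝ (w + 1)‖ * ‖riemannZeta (w + 1)‖) := by
        gcongr
        norm_num

lemma norm_chi_le_two_thirds_pow_mul_norm_chi_add {w : ℂ} (hw : 18 ≤ w.re) (n : ℕ) :
    ‖chi w‖ ≤ (2 / 3) ^ n * ‖chi (w + n)‖ := by
  induction n with
  | zero => simp
  | succ n ih =>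
    have step := norm_chi_le_two_thirds_mul_norm_chi_add_one (w := w + n)
      (by simp only [add_re, natCast_re]; linarith [n.cast_nonneg (α := ℝ)])
    calc ‖chi w‖ ≤ (2 / 3) ^ n * ‖chi (w + n)‖ := ih
      _ ≤ (2 / 3) ^ n * (2 / 3 * ‖chi (w + n + 1)‖) := by gcongr
      _ = (2 / 3) ^ (n + 1) * ‖chi (w + (n + 1 : ℕ))‖ := by push_cast; ring_nf

end Chi

section F2

lemma A_eq_ofReal : A = ((Real.pi / 3 - 1 : ℝ) : ℂ) := by
  rw [A]
  push_cast
  rfl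

/-- The term of `f2 s` containing `chi (s + 2)`, which dominates the others far to the right. -/
noncomputable def f2LeadingTerm (s : ℂ) : ℂ := (s - 2) * ((A * s + 3) * (s - 1) ^ 2 * chi (s + 2))

lemma norm_A_mul_add_three_ge {s : ℂ} (hs : 20 ≤ s.re) : 39 / 10 ≤ ‖A * s + 3‖ := by
  refine le_trans ?_ (re_le_norm _)
  rw [A_eq_ofReal, add_re, re_ofReal_mul, re_ofNat]
  nlinarith [Real.pi_gt_d2]

lemma norm_A_mul_one_sub_add_three_le {s : ℂ} (hs : 1 / 2 ≤ s.re) :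
    ‖A * (1 - s) + 3‖ ≤ ‖A * s + 3‖ := by
  have hA : 0 < Real.pi / 3 - 1 := by linarith [Real.pi_gt_three]
  rw [A_eq_ofReal]
  refine norm_le_norm_of_abs_re_le_of_abs_im_le (abs_le_abs ?_ ?_) ?_ <;>
    simp only [add_re, add_im, re_ofReal_mul, im_ofReal_mul, re_ofNat, im_ofNat, sub_re, sub_im,
      one_re, one_im]
  · nlinarith
  · nlinarith
  · simp [abs_mul]

lemma f2_one_sub (s : ℂ) :
    f2 (1 - s) = -((s + 1) * ((A * (1 - s) + 3) * s ^ 2 * chi (s - 2)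
      - 2 * s * (s + 2) * chi (s - 1) - (s - 3) * (s + 2) * chi s)) := by
  rw [f2, show 1 - s + 2 = 1 - (s - 2) by ring, show 1 - s + 1 = 1 - (s - 1) by ring,
    chi_one_sub, chi_one_sub, chi_one_sub]
  ring

lemma norm_f2LeadingTerm (s : ℂ) :
    ‖f2LeadingTerm s‖ = ‖A * s + 3‖ * (‖s - 2‖ * (‖s - 1‖ ^ 2 * ‖chi (s + 2)‖)) := by
  simp only [f2LeadingTerm, norm_mul, norm_pow]
  ring

lemma f2LeadingTerm_ne_zero {s : ℂ} (hs : 20 ≤ s.re) : f2LeadingTerm s ≠ 0 := by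
  have sub_ne_zero_of_lt {a : ℂ} (ha : a.re < 20) : s - a ≠ 0 :=
    sub_ne_zero.2 (by rintro rfl; linarith)
  have hA : A * s + 3 ≠ 0 := norm_pos_iff.1 (by linarith [norm_A_mul_add_three_ge hs])
  have hχ : chi (s + 2) ≠ 0 := chi_ne_zero_of_one_lt_re (by simp; linarith)
  exact mul_ne_zero (sub_ne_zero_of_lt (by norm_num))
    (mul_ne_zero (mul_ne_zero hA (pow_ne_zero 2 (sub_ne_zero_of_lt (by norm_num)))) hχ)

lemma norm_sub_three_le_norm_sub_one {s : ℂ} (hs : 2 ≤ s.re) : ‖s - 3‖ ≤ ‖s - 1‖ := by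
  refine norm_le_norm_of_abs_re_le_of_abs_im_le (abs_le_abs ?_ ?_) ?_ <;> simp <;> linarith

lemma norm_add_two_le_mul_norm_sub_one {s : ℂ} (hs : 20 ≤ s.re) :
    ‖s + 2‖ ≤ 22 / 19 * ‖s - 1‖ := by
  convert norm_add_ofReal_le_div_mul (a := 2) (b := -1) hs (by norm_num) (by norm_num)
    using 2 <;> norm_num [sub_eq_add_neg]

lemma norm_add_one_le_mul_norm_sub_two {s : ℂ} (hs : 20 ≤ s.re) :
    ‖s + 1‖ ≤ 7 / 6 * ‖s - 2‖ := by
  convert norm_add_ofReal_le_div_mul (a := 1) (b := -2) hs (by norm_num) (by norm_num)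
    using 2 <;> norm_num [sub_eq_add_neg]

lemma norm_le_mul_norm_sub_one {s : ℂ} (hs : 20 ≤ s.re) : ‖s‖ ≤ 20 / 19 * ‖s - 1‖ := by
  convert norm_add_ofReal_le_div_mul (a := 0) (b := -1) hs (by norm_num) (by norm_num)
    using 2 <;> norm_num [sub_eq_add_neg]

lemma norm_f2LeadingTerm_sub_f2_le {s : ℂ} (hs : 20 ≤ s.re) :
    ‖f2LeadingTerm s - f2 s‖ ≤ 1 / 2 * ‖f2LeadingTerm s‖ := by
  have sub_three_le := norm_sub_three_le_norm_sub_one (s := s) (by linarith)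
  have add_two_le := norm_add_two_le_mul_norm_sub_one hs
  have chi_add_one_le : ‖chi (s + 1)‖ ≤ 2 / 3 * ‖chi (s + 2)‖ := by
    have := norm_chi_le_two_thirds_mul_norm_chi_add_one (w := s + 1) (by simp; linarith)
    rwa [add_assoc, one_add_one_eq_two] at this
  have chi_le : ‖chi s‖ ≤ (2 / 3) ^ 2 * ‖chi (s + 2)‖ :=
    norm_chi_le_two_thirds_pow_mul_norm_chi_add (by linarith) 2
  have triangle : ‖2 * (s - 1) * (s - 3) * chi (s + 1) + (s + 2) * (s - 3) * chi s‖ ≤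
      2 * ‖s - 1‖ * ‖s - 3‖ * ‖chi (s + 1)‖ + ‖s + 2‖ * ‖s - 3‖ * ‖chi s‖ := by
    simpa only [norm_mul, Complex.norm_ofNat] using norm_add_le
      (2 * (s - 1) * (s - 3) * chi (s + 1)) ((s + 2) * (s - 3) * chi s)
  calc ‖f2LeadingTerm s - f2 s‖
      = ‖s - 2‖ * ‖2 * (s - 1) * (s - 3) * chi (s + 1) + (s + 2) * (s - 3) * chi s‖ := by
        rw [← norm_mul, f2LeadingTerm, f2]
        ring_nf
    _ ≤ ‖s - 2‖ * (2 * ‖s - 1‖ * ‖s - 1‖ * (2 / 3 * ‖chi (s + 2)‖)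
          + 22 / 19 * ‖s - 1‖ * ‖s - 1‖ * ((2 / 3) ^ 2 * ‖chi (s + 2)‖)) := by
        grw [triangle, sub_three_le, chi_add_one_le, add_two_le, chi_le]
    _ = (316 / 171) * (‖s - 2‖ * (‖s - 1‖ ^ 2 * ‖chi (s + 2)‖)) := by ring
    _ ≤ (1 / 2 * ‖A * s + 3‖) * (‖s - 2‖ * (‖s - 1‖ ^ 2 * ‖chi (s + 2)‖)) := by
        gcongr
        linarith [norm_A_mul_add_three_ge hs]
    _ = 1 / 2 * ‖f2LeadingTerm s‖ := by rw [norm_f2LeadingTerm, mul_assoc]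

lemma norm_f2_one_sub_le {s : ℂ} (hs : 20 ≤ s.re) :
    ‖f2 (1 - s)‖ ≤ 2 / 3 * ‖f2LeadingTerm s‖ := by
  have add_one_le := norm_add_one_le_mul_norm_sub_two hs
  have self_le := norm_le_mul_norm_sub_one hs
  have add_two_le := norm_add_two_le_mul_norm_sub_one hs
  have sub_three_le := norm_sub_three_le_norm_sub_one (s := s) (by linarith)
  have linear_le := norm_A_mul_one_sub_add_three_le (s := s) (by linarith)
  have chi_sub_two_le : ‖chi (s - 2)‖ ≤ (2 / 3) ^ 4 * ‖chi (s + 2)‖ := by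
    convert norm_chi_le_two_thirds_pow_mul_norm_chi_add (w := s - 2) (by simp; linarith) 4 using 4
    push_cast
    ring
  have chi_sub_one_le : ‖chi (s - 1)‖ ≤ (2 / 3) ^ 3 * ‖chi (s + 2)‖ := by
    convert norm_chi_le_two_thirds_pow_mul_norm_chi_add (w := s - 1) (by simp; linarith) 3 using 4
    push_cast
    ring
  have chi_le : ‖chi s‖ ≤ (2 / 3) ^ 2 * ‖chi (s + 2)‖ :=
    norm_chi_le_two_thirds_pow_mul_norm_chi_add (by linarith) 2
  have triangle : ‖f2 (1 - s)‖ ≤ ‖s + 1‖ * (‖A * (1 - s) + 3‖ * ‖s‖ ^ 2 * ‖chi (s - 2)‖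
      + 2 * ‖s‖ * ‖s + 2‖ * ‖chi (s - 1)‖ + ‖s - 3‖ * ‖s + 2‖ * ‖chi s‖) := by
    rw [f2_one_sub, norm_neg, norm_mul]
    gcongr
    grw [norm_sub_le, norm_sub_le]
    simp only [norm_mul, norm_pow, Complex.norm_ofNat, le_refl]
  calc ‖f2 (1 - s)‖
      ≤ 7 / 6 * ‖s - 2‖ * (‖A * s + 3‖ * (20 / 19 * ‖s - 1‖) ^ 2 * ((2 / 3) ^ 4 * ‖chi (s + 2)‖)
          + 2 * (20 / 19 * ‖s - 1‖) * (22 / 19 * ‖s - 1‖) * ((2 / 3) ^ 3 * ‖chi (s + 2)‖)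
          + ‖s - 1‖ * (22 / 19 * ‖s - 1‖) * ((2 / 3) ^ 2 * ‖chi (s + 2)‖)) := by
        grw [triangle, add_one_le, linear_le, self_le, chi_sub_two_le, add_two_le, chi_sub_one_le,
          sub_three_le, chi_le]
    _ = (22400 / 87723 * ‖A * s + 3‖ + 42196 / 29241)
          * (‖s - 2‖ * (‖s - 1‖ ^ 2 * ‖chi (s + 2)‖)) := by ring
    _ ≤ (2 / 3 * ‖A * s + 3‖) * (‖s - 2‖ * (‖s - 1‖ ^ 2 * ‖chi (s + 2)‖)) := by
        gcongr
        linarith [norm_A_mul_add_three_ge hs]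
    _ = 2 / 3 * ‖f2LeadingTerm s‖ := by rw [norm_f2LeadingTerm, mul_assoc]

end F2

theorem Z2_no_zero_right (s : ℂ) (hs : 20 ≤ s.re) : Z2 s ≠ 0 := by
  have hχ : 0 < ‖chi (2 * s)‖ :=
    norm_pos_iff.2 (chi_ne_zero_of_one_lt_re (by simp; linarith))
  have hlead : 0 < ‖f2LeadingTerm s‖ := norm_pos_iff.2 (f2LeadingTerm_ne_zero hs)
  have chi_le : ‖chi (2 * s - 1)‖ ≤ 2 / 3 * ‖chi (2 * s)‖ := by
    have := norm_chi_le_two_thirds_mul_norm_chi_add_one (w := 2 * s - 1) (by simp; linarith)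
    rwa [sub_add_cancel] at this
  have f2_ge : 1 / 2 * ‖f2LeadingTerm s‖ ≤ ‖f2 s‖ := by
    have := norm_le_norm_add_norm_sub (f2 s) (f2LeadingTerm s)
    rw [norm_sub_rev] at this
    linarith [norm_f2LeadingTerm_sub_f2_le hs]
  refine sub_ne_zero.2 fun h ↦ lt_irrefl ‖chi (2 * s) * f2 s‖ ?_
  calc ‖chi (2 * s) * f2 s‖ = ‖chi (2 * s - 1)‖ * ‖f2 (1 - s)‖ := by rw [h, norm_mul]
    _ ≤ 2 / 3 * ‖chi (2 * s)‖ * (2 / 3 * ‖f2LeadingTerm s‖) := by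
        grw [chi_le, norm_f2_one_sub_le hs]
    _ = 4 / 9 * (‖chi (2 * s)‖ * ‖f2LeadingTerm s‖) := by ring
    _ < 1 / 2 * (‖chi (2 * s)‖ * ‖f2LeadingTerm s‖) :=
        mul_lt_mul_of_pos_right (by norm_num) (by positivity)
    _ = ‖chi (2 * s)‖ * (1 / 2 * ‖f2LeadingTerm s‖) := by ring
    _ ≤ ‖chi (2 * s) * f2 s‖ := by grw [f2_ge, norm_mul]
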